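/- arXiv:2409.08714 — 12 statements merged into one kernel-verified Lean document; each statement's English description precedes it below -/
import Mathlib

section
/- Fix real constants k > 0, c > 0, c0, t, and let f : ℝ → ℝ be given by f(s) = c·β·s²/(2γ) for constants β > 0 and γ > 0. Define the map Φ_t : ℝ³ → ℝ³ by Φ_t(q, s, r) = ( q − c0·t − (1/k)·e^{k(r − f(s))}·sin(k(q − c·t)), s, r + (1/k)·e^{k(r − f(s))}·cos(k(q − c·t)) ). Then Φ_t is differentiable at every point (q, s, r), and the determinant of its (total) derivative at (q, s, r) equals 1 − e^{2k(r − f(s))}; in particular this determinant is independent of t. -/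
/-- Coordinates on the triple product. -/
def coordEquiv : (ℝ × ℝ × ℝ) ≃ₗ[ℝ] (Fin 3 → ℝ) where
  toFun p := ![p.1, p.2.1, p.2.2]
  invFun v := (v 0, v 1, v 2)
  map_add' p q := by ext i; fin_cases i <;> simp
  map_smul' a p := by ext i; fin_cases i <;> simp
  left_inv p := by simp
  right_inv v := by ext i; fin_cases i <;> simp

lemma det_triple (L : ℝ × ℝ × ℝ →L[ℝ] ℝ × ℝ × ℝ) :
    L.det = Matrix.det !![(L (1,0,0)).1, (L (0,1,0)).1, (L (0,0,1)).1;
      (L (1,0,0)).2.1, (L (0,1,0)).2.1, (L (0,0,1)).2.1;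
      (L (1,0,0)).2.2, (L (0,1,0)).2.2, (L (0,0,1)).2.2] := by
  rw [ContinuousLinearMap.det, ← LinearMap.det_toMatrix (Module.Basis.ofEquivFun coordEquiv)]
  congr 1
  ext i j
  rw [LinearMap.toMatrix_apply]
  fin_cases i <;> fin_cases j <;> simp [coordEquiv, Module.Basis.ofEquivFun]

/-- The Lagrangian flow map of the Equatorially-trapped wave solution with underlying current
is differentiable, and the determinant of its total derivative at `(q, s, r)` equals
`1 - e^{2k(r - f s)}`; in particular it is independent of `t`. -/
theorem stmt0 (k c c0 t β γ : ℝ) (hk : 0 < k) (hc : 0 < c) (hβ : 0 < β) (hγ : 0 < γ)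
    (f : ℝ → ℝ) (hf : ∀ s, f s = c * β * s ^ 2 / (2 * γ))
    (Φ : ℝ × ℝ × ℝ → ℝ × ℝ × ℝ)
    (hΦ : ∀ p : ℝ × ℝ × ℝ, Φ p =
      (p.1 - c0 * t - (1 / k) * Real.exp (k * (p.2.2 - f p.2.1)) * Real.sin (k * (p.1 - c * t)),
       p.2.1,
       p.2.2 + (1 / k) * Real.exp (k * (p.2.2 - f p.2.1)) * Real.cos (k * (p.1 - c * t)))) :
    ∀ q s r : ℝ, DifferentiableAt ℝ Φ (q, s, r) ∧
      (fderiv ℝ Φ (q, s, r)).det = 1 - Real.exp (2 * k * (r - f s)) := by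
  intro q s r
  have hq : HasFDerivAt (fun p : ℝ × ℝ × ℝ => p.1) (ContinuousLinearMap.fst ℝ ℝ (ℝ × ℝ)) (q, s, r) :=
    hasFDerivAt_fst
  have h2 : HasFDerivAt (fun p : ℝ × ℝ × ℝ => p.2) (ContinuousLinearMap.snd ℝ ℝ (ℝ × ℝ)) (q, s, r) :=
    hasFDerivAt_snd
  have hs := h2.fst
  have hr := h2.snd
  have hfd : HasDerivAt f (c * β * (2 * s) / (2 * γ)) s := by
    have h : HasDerivAt (fun s : ℝ => c * β * s ^ 2 / (2 * γ)) (c * β * (2 * s) / (2 * γ)) s := by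
      simpa using (((hasDerivAt_id s).pow 2).const_mul (c * β)).div_const (2 * γ)
    rwa [← funext hf] at h
  generalize c * β * (2 * s) / (2 * γ) = f' at hfd
  have hfs := HasDerivAt.comp_hasFDerivAt (f := fun p : ℝ × ℝ × ℝ => p.2.1) (q, s, r) hfd hs
  have hE := (((hr.sub hfs).const_mul k).exp).const_mul (1 / k)
  have hS := ((hq.sub_const (c * t)).const_mul k).sin
  have hC := ((hq.sub_const (c * t)).const_mul k).cos
  have H := ((hq.sub_const (c0 * t)).sub (hE.mul hS)).prodMk (hs.prodMk (hr.add (hE.mul hC)))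
  have H' := H.congr_of_eventuallyEq (f₁ := Φ) (Filter.Eventually.of_forall (fun p => hΦ p))
  refine ⟨H'.differentiableAt, ?_⟩
  rw [H'.fderiv, det_triple, Matrix.det_fin_three]
  have e2 : Real.exp (2 * k * (r - f s)) = Real.exp (k * (r - f s)) ^ 2 := by
    rw [← Real.exp_nat_mul]; congr 1; push_cast; ring
  rw [e2]
  have h1 := Real.sin_sq_add_cos_sq (k * (q - c * t))
  simp
  generalize Real.exp (k * (r - f s)) = E at *
  generalize Real.sin (k * (q - c * t)) = S at *
  generalize Real.cos (k * (q - c * t)) = C at *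
  field_simp
  linear_combination (-E ^ 2) * h1
end

section
/- Fix k > 0, c > 0, c0 ∈ ℝ, β > 0, γ > 0, r0 < 0 and s ∈ ℝ with s ≠ 0. Set a = cβs²/(2γ) ≥ 0 and define F : ℝ → ℝ by F(r) = e^{2k(r − a)}/(2k) − r + c0·β·s²/(2γ) − e^{2k·r0}/(2k) + r0. Then: (i) F is strictly decreasing on (−∞, a]; (ii) F(r) → +∞ as r → −∞; and (iii) there exists a (necessarily unique) r* < r0 with F(r*) = 0 if and only if e^{2k(r0 − a)}/(2k) + c0·β·s²/(2γ) < e^{2k·r0}/(2k). -/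
/-- Properties of the free-surface defining function `F`: it is strictly decreasing on
`(-∞, a]`, tends to `+∞` as `r → -∞`, and has a (necessarily unique) zero `r* < r0`
if and only if the solvability condition holds. -/
theorem stmt1 (k c c0 β γ r0 s a : ℝ) (hk : 0 < k) (hc : 0 < c) (hβ : 0 < β) (hγ : 0 < γ)
    (hr0 : r0 < 0) (hs : s ≠ 0) (ha : a = c * β * s ^ 2 / (2 * γ))
    (F : ℝ → ℝ)
    (hF : ∀ r, F r = Real.exp (2 * k * (r - a)) / (2 * k) - r + c0 * β * s ^ 2 / (2 * γ)
      - Real.exp (2 * k * r0) / (2 * k) + r0) :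
    StrictAntiOn F (Set.Iic a) ∧
    Filter.Tendsto F Filter.atBot Filter.atTop ∧
    ((∃! r, r < r0 ∧ F r = 0) ↔
      Real.exp (2 * k * (r0 - a)) / (2 * k) + c0 * β * s ^ 2 / (2 * γ)
        < Real.exp (2 * k * r0) / (2 * k)) := by
  have ha0 : 0 ≤ a := by rw [ha]; positivity
  have hanti : StrictAntiOn F (Set.Iic a) := by
    intro x hx y hy hxy
    simp only [Set.mem_Iic] at hx hy
    have h1 : 2 * k * (x - a) < 2 * k * (y - a) :=
      mul_lt_mul_of_pos_left (by linarith) (by linarith)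
    have h2 : 2 * k * (y - a) ≤ 0 := mul_nonpos_of_nonneg_of_nonpos (by linarith) (by linarith)
    have key : Real.exp (2 * k * (y - a)) - Real.exp (2 * k * (x - a)) < 2 * k * (y - x) := by
      have hd : 2 * k * (y - x) = 2 * k * (y - a) - 2 * k * (x - a) := by ring
      rw [hd]
      generalize 2 * k * (y - a) = v at *
      generalize 2 * k * (x - a) = u at *
      have e1 : Real.exp u = Real.exp v * Real.exp (u - v) := by
        rw [← Real.exp_add]; congr 1; ring
      have e2 := Real.add_one_lt_exp (x := u - v) (by linarith)
      have e3 := Real.exp_pos v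
      have e4 : Real.exp v ≤ 1 := Real.exp_le_one_iff.mpr h2
      have e5 := mul_lt_mul_of_pos_left e2 e3
      nlinarith
    have h3 : Real.exp (2 * k * (y - a)) / (2 * k) - Real.exp (2 * k * (x - a)) / (2 * k)
        < y - x := by
      rw [← sub_div, div_lt_iff₀ (by linarith)]
      linarith
    rw [hF x, hF y]
    linarith
  have htend : Filter.Tendsto F Filter.atBot Filter.atTop := by
    have h := Filter.tendsto_atTop_add_const_right Filter.atBot
      (c0 * β * s ^ 2 / (2 * γ) - Real.exp (2 * k * r0) / (2 * k) + r0)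
      (Filter.tendsto_neg_atBot_atTop (G := ℝ))
    refine Filter.tendsto_atTop_mono (fun r => ?_) h
    rw [hF r]
    have : 0 < Real.exp (2 * k * (r - a)) / (2 * k) := by positivity
    linarith
  refine ⟨hanti, htend, ?_⟩
  have hr : r0 ∈ Set.Iic a := by simp only [Set.mem_Iic]; linarith
  constructor
  · rintro ⟨r, ⟨h1, h2⟩, -⟩
    have := hanti (by simp only [Set.mem_Iic]; linarith) hr h1
    rw [h2, hF r0] at this
    linarith
  · intro h
    have hneg : F r0 < 0 := by rw [hF r0]; linarith
    have hcont : Continuous F := by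
      rw [funext hF]; fun_prop
    obtain ⟨m, hm1, hm2⟩ :=
      ((htend.eventually_ge_atTop 0).and (Filter.eventually_lt_atBot r0)).exists
    obtain ⟨r, hr1, hr2⟩ := intermediate_value_Icc' hm2.le hcont.continuousOn
      (show (0 : ℝ) ∈ Set.Icc (F r0) (F m) from ⟨hneg.le, hm1⟩)
    have hlt : r < r0 := by
      refine lt_of_le_of_ne hr1.2 ?_
      rintro rfl
      linarith
    refine ⟨r, ⟨hlt, hr2⟩, ?_⟩
    rintro y ⟨hy1, hy2⟩
    exact hanti.injOn (by simp only [Set.mem_Iic]; linarith)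
      (by simp only [Set.mem_Iic]; linarith) (hy2.trans hr2.symm)
end

section
/- Fix k > 0, c > 0, β > 0, γ > 0, r0 < 0 and suppose c0 > 0. If there exists ε > 0 such that for all s with 0 < |s| < ε the inequality e^{2k(r0 − cβs²/(2γ))}/(2k) + c0·β·s²/(2γ) < e^{2k·r0}/(2k) holds, then necessarily c0 < c·e^{2k·r0}. -/
/-- For an adverse current `c0 > 0`, if the solvability condition for the free-surface
equation holds for all small nonzero latitudes `s`, then necessarily `c0 < c·e^{2k·r0}`. -/
theorem stmt3 (k c c0 β γ r0 : ℝ) (hk : 0 < k) (hc : 0 < c) (hβ : 0 < β) (hγ : 0 < γ)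
    (hr0 : r0 < 0) (hc0 : 0 < c0)
    (h : ∃ ε > 0, ∀ s : ℝ, 0 < |s| → |s| < ε →
      Real.exp (2 * k * (r0 - c * β * s ^ 2 / (2 * γ))) / (2 * k) + c0 * β * s ^ 2 / (2 * γ)
        < Real.exp (2 * k * r0) / (2 * k)) :
    c0 < c * Real.exp (2 * k * r0) := by
  obtain ⟨ε, hε, h⟩ := h
  have hs : |ε / 2| = ε / 2 := abs_of_pos (by linarith)
  have h1 := h (ε / 2) (by rw [hs]; linarith) (by rw [hs]; linarith)
  have ht : 0 < β * (ε / 2) ^ 2 / (2 * γ) := by positivity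
  have e1 : c * β * (ε / 2) ^ 2 / (2 * γ) = c * (β * (ε / 2) ^ 2 / (2 * γ)) := by ring
  have e2 : c0 * β * (ε / 2) ^ 2 / (2 * γ) = c0 * (β * (ε / 2) ^ 2 / (2 * γ)) := by ring
  rw [e1, e2] at h1
  generalize β * (ε / 2) ^ 2 / (2 * γ) = t at h1 ht
  have e3 : 2 * k * (r0 - c * t) = 2 * k * r0 + -(2 * k * (c * t)) := by ring
  rw [e3, Real.exp_add] at h1
  have hE := Real.exp_pos (2 * k * r0)
  generalize Real.exp (2 * k * r0) = E at h1 hE ⊢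
  have h2 := Real.add_one_le_exp (-(2 * k * (c * t)))
  have h3 := mul_le_mul_of_nonneg_left h2 hE.le
  have h4 : E * (-(2 * k * (c * t)) + 1) / (2 * k) ≤
      E * Real.exp (-(2 * k * (c * t))) / (2 * k) :=
    div_le_div_of_nonneg_right h3 (by positivity)
  have h5 : E * (-(2 * k * (c * t)) + 1) / (2 * k) = E / (2 * k) - c * E * t := by
    field_simp
    ring
  have h6 : c0 * t < c * E * t := by linarith
  exact lt_of_mul_lt_mul_right h6 ht.le
end

section
/- Fix k > 0, c > 0, c0 ∈ ℝ, and real numbers q and ξ. Let L = 2π/k and T = L/c. Then the mean over one wave period of the Lagrangian horizontal velocity, (1/T)·∫₀^T ( c·e^{ξ}·cos(k(q − c·t)) − c0 ) dt, equals −c0. In particular the mean Lagrangian flow velocity is independent of the particle labels: it is westward if c0 > 0, eastward if c0 < 0, and zero if c0 = 0. -/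
/-- The mean over one wave period of the Lagrangian horizontal velocity
`u = c·e^{ξ}·cos(k(q − ct)) − c0` equals `−c0`, independently of the particle labels. -/
theorem stmt4 (k c c0 q ξ L T : ℝ) (hk : 0 < k) (hc : 0 < c)
    (hL : L = 2 * Real.pi / k) (hT : T = L / c) :
    (1 / T) * ∫ t in (0:ℝ)..T, (c * Real.exp ξ * Real.cos (k * (q - c * t)) - c0) = -c0 := by
  have hTpos : 0 < T := by
    rw [hT, hL]
    have := Real.pi_pos
    positivity
  have hkT : k * (q - c * T) = k * q - 2 * Real.pi := by
    rw [hT, hL]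
    field_simp
  have hd : ∀ t ∈ Set.uIcc (0:ℝ) T,
      HasDerivAt (fun t : ℝ => -(Real.exp ξ / k) * Real.sin (k * (q - c * t)) - c0 * t)
        (c * Real.exp ξ * Real.cos (k * (q - c * t)) - c0) t := by
    intro t _
    have h1 : HasDerivAt (fun t : ℝ => k * (q - c * t)) (k * (-(c * 1))) t :=
      (((hasDerivAt_id t).const_mul c).const_sub q).const_mul k
    have h2 := (h1.sin.const_mul (-(Real.exp ξ / k))).sub ((hasDerivAt_id t).const_mul c0)
    refine h2.congr_deriv ?_
    field_simp
  have hi : IntervalIntegrable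
      (fun t : ℝ => c * Real.exp ξ * Real.cos (k * (q - c * t)) - c0)
      MeasureTheory.volume 0 T := by
    apply Continuous.intervalIntegrable
    fun_prop
  rw [intervalIntegral.integral_eq_sub_of_hasDerivAt hd hi]
  simp only [hkT, Real.sin_sub_two_pi, mul_zero, sub_zero]
  field_simp
  ring
end

section
/- Fix k > 0, c > 0, c0 ∈ ℝ, t ∈ ℝ, F ∈ ℝ, z0 ∈ ℝ, and let L = 2π/k. Suppose R : ℝ → ℝ is differentiable, L-periodic, satisfies z0 = R(q) + (1/k)·e^{k(R(q) − F)}·cos(k(q − c·t)) for all q, and e^{k(R(q) − F)} < 1 for all q. Writing ξ(q) = k(R(q) − F) and θ(q) = k(q − c·t), the following identity holds: (1/L)·∫₀^L ( c + c·e^{ξ(q)}·cos θ(q) − c0 )·( 1 − e^{ξ(q)}·cos θ(q) − e^{ξ(q)}·R'(q)·sin θ(q) ) dq = c − (c/L)·∫₀^L e^{2ξ(q)} dq − (c0/L)·∫₀^L (1 − e^{2ξ(q)}) / (1 + e^{ξ(q)}·cos θ(q)) dq. -/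
/-- The change-of-variables identity yielding the mean Eulerian velocity formula:
transforming `(1/L)∫₀^L [c + u] dx` to Lagrangian labels gives
`c − (c/L)∫₀^L e^{2ξ} dq − (c0/L)∫₀^L (1 − e^{2ξ})/(1 + e^{ξ}cos θ) dq`. -/
theorem stmt7 (k c c0 t F z0 L : ℝ) (hk : 0 < k) (hc : 0 < c) (hL : L = 2 * Real.pi / k)
    (R : ℝ → ℝ) (hR : Differentiable ℝ R) (hper : Function.Periodic R L)
    (heq : ∀ q, z0 = R q + (1 / k) * Real.exp (k * (R q - F)) * Real.cos (k * (q - c * t)))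
    (hlt : ∀ q, Real.exp (k * (R q - F)) < 1) :
    (1 / L) * ∫ q in (0:ℝ)..L,
      (c + c * Real.exp (k * (R q - F)) * Real.cos (k * (q - c * t)) - c0) *
      (1 - Real.exp (k * (R q - F)) * Real.cos (k * (q - c * t))
        - Real.exp (k * (R q - F)) * deriv R q * Real.sin (k * (q - c * t)))
    = c - (c / L) * (∫ q in (0:ℝ)..L, Real.exp (2 * (k * (R q - F))))
      - (c0 / L) * (∫ q in (0:ℝ)..L,
          (1 - Real.exp (2 * (k * (R q - F)))) /
            (1 + Real.exp (k * (R q - F)) * Real.cos (k * (q - c * t)))) := by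
  have hLpos : 0 < L := by rw [hL]; positivity
  have hL0 : L ≠ 0 := hLpos.ne'
  have hden : ∀ q, 0 < 1 + Real.exp (k * (R q - F)) * Real.cos (k * (q - c * t)) := by
    intro q
    have h1 := hlt q
    have h2 := Real.exp_pos (k * (R q - F))
    have h3 := Real.neg_one_le_cos (k * (q - c * t))
    nlinarith
  have hRc : Continuous R := hR.continuous
  have hder : ∀ q, deriv R q * (1 + Real.exp (k * (R q - F)) * Real.cos (k * (q - c * t)))
      = Real.exp (k * (R q - F)) * Real.sin (k * (q - c * t)) := by
    intro q
    have hRd := (hR q).hasDerivAt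
    have hE : HasDerivAt (fun q => Real.exp (k * (R q - F)))
        (Real.exp (k * (R q - F)) * (k * deriv R q)) q :=
      ((hRd.sub_const F).const_mul k).exp
    have hC : HasDerivAt (fun q => Real.cos (k * (q - c * t)))
        (-Real.sin (k * (q - c * t)) * (k * 1)) q :=
      (((hasDerivAt_id q).sub_const (c * t)).const_mul k).cos
    have hT := hRd.add ((hE.const_mul (1 / k)).mul hC)
    have hK : HasDerivAt (fun _ : ℝ => z0) 0 q := hasDerivAt_const q z0
    have hfun : (fun _ : ℝ => z0) = R + (fun q => 1 / k * Real.exp (k * (R q - F))) *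
        (fun q => Real.cos (k * (q - c * t))) := by
      funext q
      exact heq q
    rw [hfun] at hK
    have h := hK.unique hT
    have hk0 := hk.ne'
    field_simp at h
    linarith
  have hpt : ∀ q, (c + c * Real.exp (k * (R q - F)) * Real.cos (k * (q - c * t)) - c0) *
      (1 - Real.exp (k * (R q - F)) * Real.cos (k * (q - c * t))
        - Real.exp (k * (R q - F)) * deriv R q * Real.sin (k * (q - c * t)))
      = (c - c * Real.exp (2 * (k * (R q - F)))) - c0 * ((1 - Real.exp (2 * (k * (R q - F)))) /
            (1 + Real.exp (k * (R q - F)) * Real.cos (k * (q - c * t)))) := by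
    intro q
    have hd := (hden q).ne'
    have h2 : Real.exp (2 * (k * (R q - F))) = Real.exp (k * (R q - F)) ^ 2 := by
      rw [← Real.exp_nat_mul]; norm_num
    have hD := eq_div_of_mul_eq hd (hder q)
    have hs := Real.sin_sq_add_cos_sq (k * (q - c * t))
    rw [h2, hD]
    generalize Real.exp (k * (R q - F)) = E at *
    generalize Real.cos (k * (q - c * t)) = C at *
    generalize Real.sin (k * (q - c * t)) = S at *
    have hJ : 1 - E * C - E * (E * S / (1 + E * C)) * S = (1 - E ^ 2) / (1 + E * C) := by
      field_simp
      linear_combination (-E ^ 2) * hs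
    rw [hJ]
    field_simp
  have hI1 : Continuous (fun q => Real.exp (2 * (k * (R q - F)))) := by fun_prop
  have hI2 : Continuous (fun q => (1 - Real.exp (2 * (k * (R q - F)))) /
            (1 + Real.exp (k * (R q - F)) * Real.cos (k * (q - c * t)))) :=
    Continuous.div (by fun_prop) (by fun_prop) (fun q => (hden q).ne')
  simp_rw [hpt]
  rw [intervalIntegral.integral_sub, intervalIntegral.integral_sub,
    intervalIntegral.integral_const_mul, intervalIntegral.integral_const_mul,
    intervalIntegral.integral_const, smul_eq_mul]
  · field_simp
    ring
  · exact continuous_const.intervalIntegrable _ _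
  · exact (continuous_const.mul hI1).intervalIntegrable _ _
  · exact (continuous_const.sub (continuous_const.mul hI1)).intervalIntegrable _ _
  · exact (continuous_const.mul hI2).intervalIntegrable _ _
end

section
/- Fix k > 0, c > 0, r0 < 0, and let L = 2π/k. Let ξ : ℝ → ℝ be continuous and L-periodic with ξ(q) ≤ k·r0 < 0 for all q, and let θ(q) = k(q − c·t) for a fixed t. If 0 < c0 < c·e^{2k·r0}, then the mean Eulerian velocity ⟨u⟩_E := −(c/L)·∫₀^L e^{2ξ(q)} dq − (c0/L)·∫₀^L (1 − e^{2ξ(q)}) / (1 + e^{ξ(q)}·cos θ(q)) dq satisfies ⟨u⟩_E ≤ −(c0/L)·∫₀^L (1 + e^{3ξ(q)})/(1 + e^{ξ(q)}) dq < 0. That is, for an adverse current (c0 > 0) the mean Eulerian flow velocity is westwards. -/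
/-- For an adverse current `0 < c0 < c·e^{2k·r0}`, the mean Eulerian flow velocity is
bounded above by `−(c0/L)∫₀^L (1 + e^{3ξ})/(1 + e^{ξ}) dq`, which is strictly negative:
the mean Eulerian flow is westwards. -/
theorem stmt8 (k c c0 t r0 L : ℝ) (hk : 0 < k) (hc : 0 < c) (hr0 : r0 < 0)
    (hL : L = 2 * Real.pi / k)
    (ξ : ℝ → ℝ) (hξc : Continuous ξ) (hper : Function.Periodic ξ L)
    (hξ : ∀ q, ξ q ≤ k * r0)
    (hc0 : 0 < c0) (hc0' : c0 < c * Real.exp (2 * k * r0)) :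
    -(c / L) * (∫ q in (0:ℝ)..L, Real.exp (2 * ξ q))
      - (c0 / L) * (∫ q in (0:ℝ)..L, (1 - Real.exp (2 * ξ q)) /
          (1 + Real.exp (ξ q) * Real.cos (k * (q - c * t))))
    ≤ -(c0 / L) * (∫ q in (0:ℝ)..L, (1 + Real.exp (3 * ξ q)) / (1 + Real.exp (ξ q)))
    ∧ -(c0 / L) * (∫ q in (0:ℝ)..L, (1 + Real.exp (3 * ξ q)) / (1 + Real.exp (ξ q))) < 0 := by
  have hLpos : 0 < L := by rw [hL]; positivity
  have hkr : k * r0 < 0 := mul_neg_of_pos_of_neg hk hr0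
  have hcc : c0 ≤ c := by
    have : Real.exp (2 * k * r0) ≤ 1 := Real.exp_le_one_iff.2 (by nlinarith)
    nlinarith
  have hx0 : ∀ q, 0 < Real.exp (ξ q) := fun q => Real.exp_pos _
  have hx1 : ∀ q, Real.exp (ξ q) < 1 := fun q =>
    Real.exp_lt_one_iff.2 (lt_of_le_of_lt (hξ q) hkr)
  have h2 : ∀ q, Real.exp (2 * ξ q) = Real.exp (ξ q) ^ 2 := fun q => by
    rw [← Real.exp_nat_mul]; norm_num
  have h3 : ∀ q, Real.exp (3 * ξ q) = Real.exp (ξ q) ^ 3 := fun q => by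
    rw [← Real.exp_nat_mul]; norm_num
  have hden : ∀ q, 0 < 1 + Real.exp (ξ q) * Real.cos (k * (q - c * t)) := fun q => by
    nlinarith [hx0 q, hx1 q, Real.neg_one_le_cos (k * (q - c * t))]
  have hden' : ∀ q, 0 < 1 + Real.exp (ξ q) := fun q => by linarith [hx0 q]
  have c1 : Continuous fun q => Real.exp (2 * ξ q) := by fun_prop
  have c2 : Continuous fun q => (1 - Real.exp (2 * ξ q)) /
      (1 + Real.exp (ξ q) * Real.cos (k * (q - c * t))) :=
    Continuous.div (by fun_prop) (by fun_prop) (fun q => (hden q).ne')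
  have c3 : Continuous fun q => (1 + Real.exp (3 * ξ q)) / (1 + Real.exp (ξ q)) :=
    Continuous.div (by fun_prop) (by fun_prop) (fun q => (hden' q).ne')
  have hpos : 0 < ∫ q in (0:ℝ)..L, (1 + Real.exp (3 * ξ q)) / (1 + Real.exp (ξ q)) :=
    intervalIntegral.intervalIntegral_pos_of_pos (c3.intervalIntegrable _ _)
      (fun q => div_pos (by positivity) (hden' q)) hLpos
  have hcL : 0 < c0 / L := div_pos hc0 hLpos
  refine ⟨?_, by nlinarith⟩
  have key : (∫ q in (0:ℝ)..L, (1 + Real.exp (3 * ξ q)) / (1 + Real.exp (ξ q))) ≤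
      ∫ q in (0:ℝ)..L, (Real.exp (2 * ξ q) + (1 - Real.exp (2 * ξ q)) /
          (1 + Real.exp (ξ q) * Real.cos (k * (q - c * t)))) := by
    apply intervalIntegral.integral_mono_on hLpos.le (c3.intervalIntegrable _ _)
      ((c1.add c2).intervalIntegrable _ _)
    intro q _
    have e1 : (1 + Real.exp (3 * ξ q)) / (1 + Real.exp (ξ q))
        = Real.exp (ξ q) ^ 2 + (1 - Real.exp (ξ q)) := by
      rw [h3, div_eq_iff (hden' q).ne']; ring
    have e2 : 1 - Real.exp (ξ q) ≤ (1 - Real.exp (2 * ξ q)) /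
        (1 + Real.exp (ξ q) * Real.cos (k * (q - c * t))) := by
      rw [le_div_iff₀ (hden q), h2]
      have : 0 ≤ (1 - Real.exp (ξ q)) * Real.exp (ξ q) * (1 - Real.cos (k * (q - c * t))) :=
        mul_nonneg (mul_nonneg (by linarith [hx1 q]) (hx0 q).le)
          (by linarith [Real.cos_le_one (k * (q - c * t))])
      nlinarith
    simp only [Pi.add_apply]
    rw [e1, ← h2 q]
    linarith
  rw [intervalIntegral.integral_add (c1.intervalIntegrable _ _)
    (c2.intervalIntegrable _ _)] at key
  have hA : 0 ≤ ∫ q in (0:ℝ)..L, Real.exp (2 * ξ q) :=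
    intervalIntegral.integral_nonneg hLpos.le (fun q _ => (Real.exp_pos _).le)
  have hle : c0 / L ≤ c / L := div_le_div_of_nonneg_right hcc hLpos.le
  have m1 := mul_le_mul_of_nonneg_left key hcL.le
  have m2 := mul_le_mul_of_nonneg_right hle hA
  rw [mul_add] at m1
  linarith
end

section
/- Fix k > 0, c > 0, r0 < 0, and let L = 2π/k. Let ξ : ℝ → ℝ be continuous and L-periodic with ξ(q) ≤ k·r0 < 0 for all q, and let θ(q) = k(q − c·t) for a fixed t. If 0 < c0 < c·e^{2k·r0}, then the mean Eulerian velocity ⟨u⟩_E := −(c/L)·∫₀^L e^{2ξ(q)} dq − (c0/L)·∫₀^L (1 − e^{2ξ(q)}) / (1 + e^{ξ(q)}·cos θ(q)) dq lies in the open interval ( −c·(1 − e^{3k·r0})/(1 − e^{k·r0}), 0 ). -/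
/-- For an adverse current `0 < c0 < c·e^{2k·r0}`, the mean Eulerian flow velocity lies in
the open interval `(−c(1 − e^{3k·r0})/(1 − e^{k·r0}), 0)`. -/
theorem stmt9 (k c c0 t r0 L : ℝ) (hk : 0 < k) (hc : 0 < c) (hr0 : r0 < 0)
    (hL : L = 2 * Real.pi / k)
    (ξ : ℝ → ℝ) (hξc : Continuous ξ) (hper : Function.Periodic ξ L)
    (hξ : ∀ q, ξ q ≤ k * r0)
    (hc0 : 0 < c0) (hc0' : c0 < c * Real.exp (2 * k * r0)) :
    -(c / L) * (∫ q in (0:ℝ)..L, Real.exp (2 * ξ q))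
      - (c0 / L) * (∫ q in (0:ℝ)..L, (1 - Real.exp (2 * ξ q)) /
          (1 + Real.exp (ξ q) * Real.cos (k * (q - c * t))))
    ∈ Set.Ioo (-(c * (1 - Real.exp (3 * k * r0)) / (1 - Real.exp (k * r0)))) 0 := by
  have hLpos : 0 < L := by rw [hL]; positivity
  obtain ⟨a, ha⟩ : ∃ a, a = Real.exp (k * r0) := ⟨_, rfl⟩
  have ha0 : 0 < a := by rw [ha]; exact Real.exp_pos _
  have ha1 : a < 1 := by
    rw [ha, Real.exp_lt_one_iff]; exact mul_neg_of_pos_of_neg hk hr0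
  have e2 : Real.exp (2 * k * r0) = a ^ 2 := by
    rw [ha, ← Real.exp_nat_mul]; congr 1; push_cast; ring
  have e3 : Real.exp (3 * k * r0) = a ^ 3 := by
    rw [ha, ← Real.exp_nat_mul]; congr 1; push_cast; ring
  have ex2 : ∀ q, Real.exp (2 * ξ q) = Real.exp (ξ q) ^ 2 := fun q => by
    rw [← Real.exp_nat_mul]; congr 1
  have hx0 : ∀ q, 0 < Real.exp (ξ q) := fun q => Real.exp_pos _
  have hxa : ∀ q, Real.exp (ξ q) ≤ a := fun q => by
    rw [ha]; exact Real.exp_le_exp.mpr (hξ q)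
  have hden : ∀ q, 1 - Real.exp (ξ q) ≤
      1 + Real.exp (ξ q) * Real.cos (k * (q - c * t)) := fun q => by
    nlinarith [hx0 q, Real.neg_one_le_cos (k * (q - c * t))]
  have hden0 : ∀ q, 0 < 1 + Real.exp (ξ q) * Real.cos (k * (q - c * t)) := fun q => by
    linarith [hden q, hxa q]
  rw [e2] at hc0'
  rw [e3, ← ha]
  simp only [ex2]
  have c1 : Continuous fun q => Real.exp (ξ q) ^ 2 := by fun_prop
  have c2 : Continuous fun q => (1 - Real.exp (ξ q) ^ 2) /
      (1 + Real.exp (ξ q) * Real.cos (k * (q - c * t))) :=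
    Continuous.div (by fun_prop) (by fun_prop) (fun q => (hden0 q).ne')
  have I1pos : 0 < ∫ q in (0:ℝ)..L, Real.exp (ξ q) ^ 2 :=
    intervalIntegral.intervalIntegral_pos_of_pos (c1.intervalIntegrable _ _)
      (fun q => by positivity) hLpos
  have I2pos : 0 ≤ ∫ q in (0:ℝ)..L, (1 - Real.exp (ξ q) ^ 2) /
      (1 + Real.exp (ξ q) * Real.cos (k * (q - c * t))) :=
    intervalIntegral.integral_nonneg hLpos.le (fun q _ =>
      div_nonneg (by nlinarith [hx0 q, hxa q]) (hden0 q).le)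
  have I1le : (∫ q in (0:ℝ)..L, Real.exp (ξ q) ^ 2) ≤ L * a ^ 2 := by
    have := intervalIntegral.integral_mono_on (μ := MeasureTheory.volume) (g := fun _ => a ^ 2) hLpos.le
      (c1.intervalIntegrable _ _) (continuous_const.intervalIntegrable _ _)
      (fun q _ => pow_le_pow_left₀ (hx0 q).le (hxa q) 2)
    simpa using this
  have I2le : (∫ q in (0:ℝ)..L, (1 - Real.exp (ξ q) ^ 2) /
      (1 + Real.exp (ξ q) * Real.cos (k * (q - c * t)))) ≤ L * (1 + a) := by
    have := intervalIntegral.integral_mono_on (μ := MeasureTheory.volume) (g := fun _ => 1 + a) hLpos.le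
      (c2.intervalIntegrable _ _) (continuous_const.intervalIntegrable _ _)
      (fun q _ => by
        rw [div_le_iff₀ (hden0 q)]
        have h1 := mul_le_mul_of_nonneg_left (hden q) (by linarith [hx0 q] : 0 ≤ 1 + Real.exp (ξ q))
        have h2 := mul_le_mul_of_nonneg_right (hxa q) (hden0 q).le
        nlinarith)
    simpa [mul_add] using this
  generalize (∫ q in (0:ℝ)..L, Real.exp (ξ q) ^ 2) = I1 at *
  generalize (∫ q in (0:ℝ)..L, (1 - Real.exp (ξ q) ^ 2) /
      (1 + Real.exp (ξ q) * Real.cos (k * (q - c * t)))) = I2 at *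
  have hr : c * (1 - a ^ 3) / (1 - a) = c * (1 + a + a ^ 2) := by
    rw [div_eq_iff (by linarith)]; ring
  rw [hr]
  have p1 : 0 < c / L * I1 := by positivity
  have p2 : 0 ≤ c0 / L * I2 := by positivity
  have q1 : c / L * I1 ≤ c * a ^ 2 := by
    calc c / L * I1 ≤ c / L * (L * a ^ 2) := by gcongr
      _ = c * a ^ 2 := by field_simp
  have q2 : c0 / L * I2 ≤ c0 * (1 + a) := by
    calc c0 / L * I2 ≤ c0 / L * (L * (1 + a)) := by gcongr
      _ = c0 * (1 + a) := by field_simp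
  have hcc : c0 < c := by nlinarith [mul_pos hc (by nlinarith : 0 < 1 - a ^ 2)]
  have q3 : c0 * (1 + a) < c * (1 + a) := by gcongr
  constructor
  · linarith
  · linarith
end

section
/- Fix k > 0, c > 0, and let L = 2π/k. Let ξ : ℝ → ℝ be continuous and L-periodic with ξ(q) < 0 for all q, and let θ(q) = k(q − c·t) for a fixed t. Suppose c0 ≤ 0 satisfies c0 > −c · min_{q ∈ [0,L]} [ e^{2ξ(q)}·(1 − e^{ξ(q)}) / (1 − e^{2ξ(q)}) ]. Then the mean Eulerian velocity ⟨u⟩_E := −(c/L)·∫₀^L e^{2ξ(q)} dq − (c0/L)·∫₀^L (1 − e^{2ξ(q)}) / (1 + e^{ξ(q)}·cos θ(q)) dq is strictly negative, i.e. the mean Eulerian flow is westwards. -/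
/-- For a following (or zero) current `c0 ≤ 0` satisfying
`c0 > −c · min_{q ∈ [0,L]} e^{2ξ}(1 − e^{ξ})/(1 − e^{2ξ})`, the mean Eulerian flow
velocity is strictly negative (westwards). -/
theorem stmt10 (k c c0 t L : ℝ) (hk : 0 < k) (hc : 0 < c) (hL : L = 2 * Real.pi / k)
    (ξ : ℝ → ℝ) (hξc : Continuous ξ) (hper : Function.Periodic ξ L) (hξ : ∀ q, ξ q < 0)
    (hc0 : c0 ≤ 0)
    (hmin : c0 > -c * sInf ((fun q => Real.exp (2 * ξ q) * (1 - Real.exp (ξ q)) /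
        (1 - Real.exp (2 * ξ q))) '' Set.Icc 0 L)) :
    -(c / L) * (∫ q in (0:ℝ)..L, Real.exp (2 * ξ q))
      - (c0 / L) * (∫ q in (0:ℝ)..L, (1 - Real.exp (2 * ξ q)) /
          (1 + Real.exp (ξ q) * Real.cos (k * (q - c * t)))) < 0 := by
  have hLpos : 0 < L := by rw [hL]; positivity
  have hE1 : ∀ q, Real.exp (ξ q) < 1 := fun q => by
    rw [Real.exp_lt_one_iff]; exact hξ q
  have hE0 : ∀ q, 0 < Real.exp (ξ q) := fun q => Real.exp_pos _
  have hsq : ∀ q, Real.exp (2 * ξ q) = Real.exp (ξ q) ^ 2 := fun q => by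
    rw [← Real.exp_nat_mul]; norm_num
  have hd : ∀ q, 0 < 1 - Real.exp (2 * ξ q) := fun q => by
    rw [hsq]; nlinarith [hE0 q, hE1 q]
  have hle : ∀ q, 1 - Real.exp (ξ q) ≤ 1 + Real.exp (ξ q) * Real.cos (k * (q - c * t)) :=
    fun q => by nlinarith [hE0 q, Real.neg_one_le_cos (k * (q - c * t))]
  have hpos : ∀ q, 0 < 1 + Real.exp (ξ q) * Real.cos (k * (q - c * t)) :=
    fun q => by linarith [hle q, hE1 q]
  have hbdd : BddBelow ((fun q => Real.exp (2 * ξ q) * (1 - Real.exp (ξ q)) /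
        (1 - Real.exp (2 * ξ q))) '' Set.Icc 0 L) := by
    refine ⟨0, ?_⟩
    rintro _ ⟨q, _, rfl⟩
    have h1 : 0 < 1 - Real.exp (ξ q) := by linarith [hE1 q]
    have h2 := hd q
    show 0 ≤ Real.exp (2 * ξ q) * (1 - Real.exp (ξ q)) / (1 - Real.exp (2 * ξ q))
    positivity
  have hc1 : Continuous fun q => Real.exp (2 * ξ q) := by fun_prop
  have hc2 : Continuous fun q => (1 - Real.exp (2 * ξ q)) /
          (1 + Real.exp (ξ q) * Real.cos (k * (q - c * t))) :=
    Continuous.div (by fun_prop) (by fun_prop) (fun q => (hpos q).ne')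
  have key : 0 < ∫ q in (0:ℝ)..L, (c * Real.exp (2 * ξ q) + c0 * ((1 - Real.exp (2 * ξ q)) /
          (1 + Real.exp (ξ q) * Real.cos (k * (q - c * t))))) := by
    refine intervalIntegral.intervalIntegral_pos_of_pos_on
      (((hc1.const_mul c).add (hc2.const_mul c0)).intervalIntegrable _ _) ?_ hLpos
    intro q hq
    have hm := csInf_le hbdd ⟨q, Set.Ioo_subset_Icc_self hq, rfl⟩
    have h1 : -c0 < c * (Real.exp (2 * ξ q) * (1 - Real.exp (ξ q)) /
        (1 - Real.exp (2 * ξ q))) := by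
      have := mul_le_mul_of_nonneg_left hm hc.le
      simp only at this
      linarith
    rw [← mul_div_assoc, lt_div_iff₀ (hd q)] at h1
    have h2 := mul_le_mul_of_nonneg_left (hle q) (mul_pos hc (Real.exp_pos (2 * ξ q))).le
    have h3 : c * Real.exp (2 * ξ q) + c0 * ((1 - Real.exp (2 * ξ q)) /
          (1 + Real.exp (ξ q) * Real.cos (k * (q - c * t)))) =
        (c * Real.exp (2 * ξ q) * (1 + Real.exp (ξ q) * Real.cos (k * (q - c * t)))
          + c0 * (1 - Real.exp (2 * ξ q))) /
          (1 + Real.exp (ξ q) * Real.cos (k * (q - c * t))) := by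
      rw [add_div, mul_div_cancel_right₀ _ (hpos q).ne', mul_div_assoc]
    rw [h3]
    apply div_pos _ (hpos q)
    linarith
  rw [intervalIntegral.integral_add ((hc1.const_mul c).intervalIntegrable _ _)
    ((hc2.const_mul c0).intervalIntegrable _ _), intervalIntegral.integral_const_mul,
    intervalIntegral.integral_const_mul] at key
  have h := div_pos key hLpos
  rw [add_div, mul_div_right_comm, mul_div_right_comm] at h
  linarith
end

section
/- Fix k > 0, c > 0, and let L = 2π/k. Let ξ : ℝ → ℝ be continuous and L-periodic with ξ(q) < 0 for all q, and let θ(q) = k(q − c·t) for a fixed t. Suppose c0 < 0 satisfies c0 < −c · max_{q ∈ [0,L]} [ e^{2ξ(q)}·(1 + e^{ξ(q)}) / (1 − e^{2ξ(q)}) ]. Then the mean Eulerian velocity ⟨u⟩_E := −(c/L)·∫₀^L e^{2ξ(q)} dq − (c0/L)·∫₀^L (1 − e^{2ξ(q)}) / (1 + e^{ξ(q)}·cos θ(q)) dq is strictly positive, i.e. the mean Eulerian flow is eastwards. -/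
/-- For a following current `c0 < 0` satisfying
`c0 < −c · max_{q ∈ [0,L]} e^{2ξ}(1 + e^{ξ})/(1 − e^{2ξ})`, the mean Eulerian flow
velocity is strictly positive (eastwards). -/
theorem stmt11 (k c c0 t L : ℝ) (hk : 0 < k) (hc : 0 < c) (hL : L = 2 * Real.pi / k)
    (ξ : ℝ → ℝ) (hξc : Continuous ξ) (hper : Function.Periodic ξ L) (hξ : ∀ q, ξ q < 0)
    (hc0 : c0 < 0)
    (hmax : c0 < -c * sSup ((fun q => Real.exp (2 * ξ q) * (1 + Real.exp (ξ q)) /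
        (1 - Real.exp (2 * ξ q))) '' Set.Icc 0 L)) :
    0 < -(c / L) * (∫ q in (0:ℝ)..L, Real.exp (2 * ξ q))
      - (c0 / L) * (∫ q in (0:ℝ)..L, (1 - Real.exp (2 * ξ q)) /
          (1 + Real.exp (ξ q) * Real.cos (k * (q - c * t)))) := by
  have hLpos : 0 < L := by rw [hL]; positivity
  have hE : ∀ q, Real.exp (2 * ξ q) < 1 := fun q => by
    rw [Real.exp_lt_one_iff]; linarith [hξ q]
  have hE1 : ∀ q, Real.exp (ξ q) < 1 := fun q => by
    rw [Real.exp_lt_one_iff]; exact hξ q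
  have hden : ∀ q, 0 < 1 + Real.exp (ξ q) * Real.cos (k * (q - c * t)) := fun q => by
    nlinarith [hE1 q, Real.exp_pos (ξ q), Real.neg_one_le_cos (k * (q - c * t))]
  have hcf : Continuous (fun q => Real.exp (2 * ξ q)) := by fun_prop
  have hcg : Continuous (fun q => (1 - Real.exp (2 * ξ q)) /
      (1 + Real.exp (ξ q) * Real.cos (k * (q - c * t)))) :=
    Continuous.div (by fun_prop) (by fun_prop) (fun q => (hden q).ne')
  have hch : Continuous (fun q => Real.exp (2 * ξ q) * (1 + Real.exp (ξ q)) /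
        (1 - Real.exp (2 * ξ q))) :=
    Continuous.div (by fun_prop) (by fun_prop) (fun q => by linarith [hE q])
  have hbdd := (isCompact_Icc (a := (0:ℝ)) (b := L)).bddAbove_image hch.continuousOn
  have key : 0 < ∫ q in (0:ℝ)..L, ((-c) * Real.exp (2 * ξ q) + (-c0) * ((1 - Real.exp (2 * ξ q)) /
      (1 + Real.exp (ξ q) * Real.cos (k * (q - c * t))))) := by
    apply intervalIntegral.intervalIntegral_pos_of_pos_on
    · exact ((hcf.const_mul (-c)).add (hcg.const_mul (-c0))).intervalIntegrable _ _
    · intro q hq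
      have h1 := le_csSup hbdd (Set.mem_image_of_mem _ (Set.Ioo_subset_Icc_self hq))
      have h2 := mul_le_mul_of_nonneg_left h1 hc.le
      have h3 : c * (Real.exp (2 * ξ q) * (1 + Real.exp (ξ q)) /
        (1 - Real.exp (2 * ξ q))) < -c0 := lt_of_le_of_lt h2 (by linarith)
      have hp : 0 < 1 - Real.exp (2 * ξ q) := by linarith [hE q]
      rw [← mul_div_assoc, div_lt_iff₀ hp] at h3
      have h4 : c * Real.exp (2 * ξ q) < (-c0) * (1 - Real.exp (2 * ξ q)) /
          (1 + Real.exp (ξ q) * Real.cos (k * (q - c * t))) := by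
        rw [lt_div_iff₀ (hden q)]
        refine lt_of_le_of_lt ?_ h3
        rw [mul_assoc]
        have := Real.cos_le_one (k * (q - c * t))
        gcongr
        nlinarith [Real.exp_pos (ξ q)]
      rw [mul_div_assoc] at h4
      linarith
    · exact hLpos
  rw [intervalIntegral.integral_add ((hcf.const_mul (-c)).intervalIntegrable _ _)
    ((hcg.const_mul (-c0)).intervalIntegrable _ _), intervalIntegral.integral_const_mul,
    intervalIntegral.integral_const_mul] at key
  generalize (∫ q in (0:ℝ)..L, Real.exp (2 * ξ q)) = A at key ⊢
  generalize (∫ q in (0:ℝ)..L, (1 - Real.exp (2 * ξ q)) /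
          (1 + Real.exp (ξ q) * Real.cos (k * (q - c * t)))) = B at key ⊢
  have h5 := div_pos key hLpos
  have h6 : -(c / L) * A - (c0 / L) * B = (-c * A + -c0 * B) / L := by ring
  rw [h6]
  exact h5
end

section
/- Fix k > 0, c > 0, r0 < 0, t ∈ ℝ, F ∈ ℝ, z0 ∈ ℝ, and let L = 2π/k. Suppose R : ℝ → ℝ is differentiable, L-periodic, satisfies R(q) < r0 and z0 = R(q) + (1/k)·e^{k(R(q) − F)}·cos(k(q − c·t)) for all q, with F ≥ 0. Write ξ(q) = k(R(q) − F) and θ(q) = k(q − c·t). If 0 ≤ c0 < c·e^{2k·r0}, then the Stokes drift U^S := (1/L)·∫₀^L ( c·e^{2ξ(q)} − c0 ) dq + (c0/L)·∫₀^L (1 − e^{2ξ(q)}) / (1 + e^{ξ(q)}·cos θ(q)) dq is strictly positive, i.e. the Stokes drift is eastwards throughout the fluid domain. -/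
lemma key_ineq (u v x M : ℝ) (hM : M ≤ -1) (hv : v < 0) (hx : 0 ≤ x) (hx1 : x ≤ 1)
    (h1 : M = u + Real.exp u * x) (h2 : M = v - Real.exp v * x) :
    (1 - Real.exp u ^ 2) * Real.exp u / (1 + Real.exp u * x)
      ≤ (1 - Real.exp v ^ 2) * Real.exp v / (1 - Real.exp v * x) := by
  have hu1 : u ≤ -1 := by nlinarith [Real.exp_pos u]
  have huv : u ≤ v := by nlinarith [Real.exp_pos u, Real.exp_pos v, mul_nonneg (Real.exp_pos u).le hx, mul_nonneg (Real.exp_pos v).le hx]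
  have hab := Real.exp_le_exp.2 huv
  have ha := Real.exp_pos u
  have hb := Real.exp_pos v
  have hb1 : Real.exp v < 1 := by simpa using hv
  have ha2 : Real.exp u ≤ 1 / 2 := by
    have h3 := Real.add_one_le_exp (-u)
    have h4 : Real.exp u * Real.exp (-u) = 1 := by rw [← Real.exp_add]; simp
    nlinarith
  have hlog : Real.exp v * (2 - Real.exp v * x) ≤ 1 := by
    have h3 := Real.add_one_le_exp (-v)
    have h4 : Real.exp v * Real.exp (-v) = 1 := by rw [← Real.exp_add]; simp
    nlinarith
  generalize Real.exp u = a at *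
  generalize Real.exp v = b at *
  have hbx : b * x < 1 := by nlinarith
  have hax : 0 ≤ a * x := by positivity
  have hbx0 : 0 ≤ b * x := by positivity
  have hA : 0 ≤ (1 - a ^ 2) * a := mul_nonneg (by nlinarith) ha.le
  have hB : 0 ≤ (1 - b ^ 2) * b := mul_nonneg (by nlinarith) hb.le
  have hL : (1 - a ^ 2) * a / (1 + a * x) ≤ (1 - a ^ 2) * a := div_le_self hA (by linarith)
  refine hL.trans ?_
  rw [le_div_iff₀ (by linarith)]
  rcases le_total (b ^ 2 + b - 1) 0 with h | h
  · have : (1 - a ^ 2) * a ≤ (1 - b ^ 2) * b := by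
      have h5 : 0 ≤ 1 - a ^ 2 - a * b - b ^ 2 := by nlinarith
      nlinarith [mul_nonneg (sub_nonneg.2 hab) h5]
    nlinarith [mul_nonneg hA hbx0]
  · have h6 : b ^ 3 ≤ 2 * b - 1 := by nlinarith [mul_nonneg (sub_nonneg.2 hb1.le) h]
    have h7 : b ≤ x := by
      have : b ^ 2 * b ≤ b ^ 2 * x := by nlinarith
      exact le_of_mul_le_mul_left this (by positivity)
    have h8 : (1 - a ^ 2) * a ≤ b := by nlinarith [pow_pos ha 3]
    have h9 : 1 - b * x ≤ 1 - b ^ 2 := by nlinarith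
    calc (1 - a ^ 2) * a * (1 - b * x) ≤ b * (1 - b ^ 2) :=
          mul_le_mul h8 h9 (by linarith) hb.le
      _ = _ := by ring

lemma sum_pos_aux (c c0 u v x M : ℝ) (hc : c0 < c) (hc0 : 0 ≤ c0) (hM : M ≤ -1)
    (hu : u < 0) (hv : v < 0) (hx : 0 ≤ x) (hx1 : x ≤ 1)
    (h1 : M = u + Real.exp u * x) (h2 : M = v + Real.exp v * (-x)) :
    0 < (c * Real.exp (2 * u) - c0 + c0 * ((1 - Real.exp (2 * u)) / (1 + Real.exp u * x)))
      + (c * Real.exp (2 * v) - c0 + c0 * ((1 - Real.exp (2 * v)) / (1 + Real.exp v * (-x)))) := by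
  have hk := key_ineq u v x M hM hv hx hx1 h1 (by linarith)
  have e : ∀ w, Real.exp (2 * w) = Real.exp w ^ 2 := fun w => by
    rw [← Real.exp_nat_mul]; norm_num
  rw [e, e]
  have ha := Real.exp_pos u
  have hb := Real.exp_pos v
  have hb1 : Real.exp v < 1 := by simpa using hv
  generalize Real.exp u = a at *
  generalize Real.exp v = b at *
  have d1 : 1 + a * x ≠ 0 := by positivity
  have d2 : 1 - b * x ≠ 0 := by nlinarith
  have i1 : (1 - a ^ 2) / (1 + a * x) = (1 - a ^ 2) - x * ((1 - a ^ 2) * a / (1 + a * x)) := by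
    field_simp; ring
  have i2 : (1 - b ^ 2) / (1 + b * (-x)) = (1 - b ^ 2) + x * ((1 - b ^ 2) * b / (1 - b * x)) := by
    rw [show 1 + b * (-x) = 1 - b * x by ring]
    field_simp; ring
  rw [i1, i2]
  have := mul_nonneg (mul_nonneg hc0 hx) (sub_nonneg.2 hk)
  have p1 := mul_pos (sub_pos.2 hc) (pow_pos ha 2)
  have p2 := mul_pos (sub_pos.2 hc) (pow_pos hb 2)
  nlinarith

/-- For an adverse (or zero) current `0 ≤ c0 < c·e^{2k·r0}`, the Stokes drift
`U^S = (1/L)∫₀^L (c·e^{2ξ} − c0) dq + (c0/L)∫₀^L (1 − e^{2ξ})/(1 + e^{ξ}cos θ) dq`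
is strictly positive: the Stokes drift is eastwards throughout the fluid domain. -/
theorem stmt12 (k c c0 t F z0 r0 L : ℝ) (hk : 0 < k) (hc : 0 < c) (hr0 : r0 < 0)
    (hF : 0 ≤ F) (hL : L = 2 * Real.pi / k)
    (R : ℝ → ℝ) (hR : Differentiable ℝ R) (hper : Function.Periodic R L)
    (hRr0 : ∀ q, R q < r0)
    (heq : ∀ q, z0 = R q + (1 / k) * Real.exp (k * (R q - F)) * Real.cos (k * (q - c * t)))
    (hc0 : 0 ≤ c0) (hc0' : c0 < c * Real.exp (2 * k * r0)) :
    0 < (1 / L) * (∫ q in (0:ℝ)..L, (c * Real.exp (2 * (k * (R q - F))) - c0))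
      + (c0 / L) * (∫ q in (0:ℝ)..L, (1 - Real.exp (2 * (k * (R q - F)))) /
          (1 + Real.exp (k * (R q - F)) * Real.cos (k * (q - c * t)))) := by
  have hLpos : 0 < L := by rw [hL]; positivity
  have hkL : k * (L / 2) = Real.pi := by rw [hL]; field_simp
  have hcc : c0 < c := by
    have : Real.exp (2 * k * r0) < 1 := by
      rw [Real.exp_lt_one_iff]; nlinarith
    nlinarith
  have hneg : ∀ q, k * (R q - F) < 0 := fun q => by nlinarith [hRr0 q]
  have hM' : ∀ q, k * (z0 - F) = k * (R q - F) +
      Real.exp (k * (R q - F)) * Real.cos (k * (q - c * t)) := fun q => by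
    have := heq q
    rw [this]; field_simp; ring
  have hM : k * (z0 - F) ≤ -1 := by
    have h := hM' (c * t + L / 2)
    rw [show k * (c * t + L / 2 - c * t) = Real.pi by rw [← hkL]; ring, Real.cos_pi] at h
    have := Real.add_one_le_exp (k * (R (c * t + L / 2) - F))
    linarith
  have hden : ∀ q, 0 < 1 + Real.exp (k * (R q - F)) * Real.cos (k * (q - c * t)) := fun q => by
    have h1 : Real.exp (k * (R q - F)) < 1 := by simpa only [Real.exp_lt_one_iff] using hneg q
    nlinarith [Real.exp_pos (k * (R q - F)), Real.neg_one_le_cos (k * (q - c * t))]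
  have hRc : Continuous R := hR.continuous
  set A : ℝ → ℝ := fun q => c * Real.exp (2 * (k * (R q - F))) - c0 with hA
  set B : ℝ → ℝ := fun q => (1 - Real.exp (2 * (k * (R q - F)))) /
          (1 + Real.exp (k * (R q - F)) * Real.cos (k * (q - c * t))) with hB
  have cA : Continuous A := by fun_prop
  have cB : Continuous B := by
    apply Continuous.div (by fun_prop) (by fun_prop)
    exact fun q => (hden q).ne'
  set G : ℝ → ℝ := fun q => A q + c0 * B q with hG
  have cG : Continuous G := by fun_prop
  have hshift : ∀ q, Real.cos (k * (q + L / 2 - c * t)) = - Real.cos (k * (q - c * t)) := fun q => by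
    rw [← Real.cos_add_pi, ← hkL]; ring_nf
  have pG : Function.Periodic G L := fun q => by
    have h2 : Real.cos (k * (q + L - c * t)) = Real.cos (k * (q - c * t)) := by
      have := hshift (q + L / 2)
      rw [hshift q, add_assoc, add_halves] at this
      simpa using this
    simp only [hG, hA, hB, hper q, h2]
  have hsum : ∀ q, 0 < G q + G (q + L / 2) := fun q => by
    have e1 := hM' q
    have e2 := hM' (q + L / 2)
    have e3 := hshift q
    rcases le_total 0 (Real.cos (k * (q - c * t))) with h | h
    · rw [e3] at e2
      simp only [hG, hA, hB, e3]
      exact sum_pos_aux c c0 _ _ _ _ hcc hc0 hM (hneg _) (hneg _) h (Real.cos_le_one _) e1 e2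
    · have e4 : Real.cos (k * (q - c * t)) = - Real.cos (k * (q + L / 2 - c * t)) := by
        rw [e3]; ring
      rw [e4] at e1
      rw [add_comm]
      simp only [hG, hA, hB, e4]
      exact sum_pos_aux c c0 _ _ _ _ hcc hc0 hM (hneg _) (hneg _) (by linarith)
        (Real.cos_le_one _) e2 e1
  have hI : ∫ q in (0:ℝ)..L, G (q + L / 2) = ∫ q in (0:ℝ)..L, G q := by
    rw [intervalIntegral.integral_comp_add_right]
    have := pG.intervalIntegral_add_eq (L / 2) 0
    simpa [add_comm] using this
  have hpos : 0 < ∫ q in (0:ℝ)..L, (G q + G (q + L / 2)) :=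
    intervalIntegral.intervalIntegral_pos_of_pos
      (Continuous.intervalIntegrable (by fun_prop) _ _) hsum hLpos
  rw [intervalIntegral.integral_add (cG.intervalIntegrable _ _)
    (Continuous.intervalIntegrable (by fun_prop) _ _), hI] at hpos
  have hGe : ∫ q in (0:ℝ)..L, G q = (∫ q in (0:ℝ)..L, A q) + c0 * ∫ q in (0:ℝ)..L, B q := by
    rw [hG, intervalIntegral.integral_add (cA.intervalIntegrable _ _)
      (Continuous.intervalIntegrable (by fun_prop) _ _), intervalIntegral.integral_const_mul]
  have : (1 / L) * (∫ q in (0:ℝ)..L, A q) + (c0 / L) * (∫ q in (0:ℝ)..L, B q)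
      = (1 / L) * ∫ q in (0:ℝ)..L, G q := by rw [hGe]; ring
  rw [this]
  have h3 : 0 < ∫ q in (0:ℝ)..L, G q := by linarith
  positivity
end

section
/- Fix k > 0, c > 0, c0 ∈ ℝ, t ∈ ℝ, F ∈ ℝ, and x0 ∈ ℝ. Suppose γ : ℝ → ℝ is differentiable and satisfies, for all r, x0 = γ(r) − c0·t − (1/k)·e^{k(r − F)}·sin(k(γ(r) − c·t)) together with 1 − e^{k(r − F)}·cos(k(γ(r) − c·t)) ≠ 0. Define z(r) = r + (1/k)·e^{k(r − F)}·cos(k(γ(r) − c·t)). Then z is differentiable and for all r, z'(r) = (1 − e^{2ξ(r)}) / (1 − e^{ξ(r)}·cos θ(r)), where ξ(r) = k(r − F) and θ(r) = k(γ(r) − c·t). -/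
/-- The vertical coordinate `z(r) = r + (1/k)e^{k(r−F)}cos(k(γ(r)−ct))` along the Eulerian
line `x = x0` is differentiable, with `z'(r) = (1 − e^{2ξ})/(1 − e^{ξ}cos θ)`. -/
theorem stmt14 (k c c0 t F x0 : ℝ) (hk : 0 < k) (hc : 0 < c)
    (γ : ℝ → ℝ) (hγ : Differentiable ℝ γ)
    (heq : ∀ r, x0 = γ r - c0 * t
      - (1 / k) * Real.exp (k * (r - F)) * Real.sin (k * (γ r - c * t)))
    (hden : ∀ r, 1 - Real.exp (k * (r - F)) * Real.cos (k * (γ r - c * t)) ≠ 0)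
    (z : ℝ → ℝ)
    (hz : ∀ r, z r = r + (1 / k) * Real.exp (k * (r - F)) * Real.cos (k * (γ r - c * t))) :
    Differentiable ℝ z ∧
      ∀ r, deriv z r = (1 - Real.exp (2 * (k * (r - F)))) /
        (1 - Real.exp (k * (r - F)) * Real.cos (k * (γ r - c * t))) := by
  have key : ∀ r, HasDerivAt z ((1 - Real.exp (2 * (k * (r - F)))) /
        (1 - Real.exp (k * (r - F)) * Real.cos (k * (γ r - c * t)))) r := by
    intro r
    have hk0 : k ≠ 0 := hk.ne'
    have hg : HasDerivAt γ (deriv γ r) r := (hγ r).hasDerivAt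
    have hE : HasDerivAt (fun r => (1 / k) * Real.exp (k * (r - F)))
        ((1 / k) * (Real.exp (k * (r - F)) * (k * 1))) r :=
      ((((hasDerivAt_id r).sub_const F).const_mul k).exp).const_mul (1 / k)
    have hT : HasDerivAt (fun r => k * (γ r - c * t)) (k * deriv γ r) r :=
      (hg.sub_const (c * t)).const_mul k
    have h1 := (hg.sub_const (c0 * t)).fun_sub (hE.fun_mul hT.sin)
    have h2 : HasDerivAt (fun _ : ℝ => x0) 0 r := hasDerivAt_const r x0
    rw [show (fun _ : ℝ => x0) = _ from funext heq] at h2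
    have h3 := h1.unique h2
    have h4 := (hasDerivAt_id' r).fun_add (hE.fun_mul hT.cos)
    rw [← show z = _ from funext hz] at h4
    refine h4.congr_deriv (Eq.symm ?_)
    clear h4 h1 h2 hE hT hg
    have hd := hden r
    have hsc := Real.sin_sq_add_cos_sq (k * (γ r - c * t))
    rw [two_mul, Real.exp_add]
    generalize Real.exp (k * (r - F)) = E at *
    generalize Real.sin (k * (γ r - c * t)) = S at *
    generalize Real.cos (k * (γ r - c * t)) = C at *
    generalize deriv γ r = g at *
    have h5 : g * (1 - E * C) = E * S := by
      field_simp at h3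
      linarith
    rw [div_eq_iff hd]
    field_simp
    linear_combination E ^ 2 * hsc + E * S * h5
  exact ⟨fun r => (key r).differentiableAt, fun r => (key r).deriv⟩
end

section
/- Fix k > 0, c > 0, F ≥ 0, and labels r̃ < r0 < 0. Suppose c0 ∈ ℝ satisfies |c0| ≤ c·e^{k(r̃ − F)}. Then the trough mass flux ∫_{r̃}^{r0} ( −c0 − c·e^{k(r − F)} ) · (1 − e^{2k(r − F)}) / (1 + e^{k(r − F)}) dr is strictly negative. -/
/-- For a sufficiently small underlying current, `|c0| ≤ c·e^{k(r̃ − F)}`, the mass flux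
between the streamline `r̃` and the free surface `r0` beneath a wave trough is backward:
`∫_{r̃}^{r0} (−c0 − c·e^{k(r−F)})(1 − e^{2k(r−F)})/(1 + e^{k(r−F)}) dr < 0`. -/
theorem stmt19 (k c c0 F rt r0 : ℝ) (hk : 0 < k) (hc : 0 < c) (hF : 0 ≤ F)
    (h1 : rt < r0) (h2 : r0 < 0)
    (hc0 : |c0| ≤ c * Real.exp (k * (rt - F))) :
    (∫ r in rt..r0, (-c0 - c * Real.exp (k * (r - F))) *
      (1 - Real.exp (2 * (k * (r - F)))) / (1 + Real.exp (k * (r - F)))) < 0 := by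
  have hcont : Continuous (fun r : ℝ => -((-c0 - c * Real.exp (k * (r - F))) *
      (1 - Real.exp (2 * (k * (r - F)))) / (1 + Real.exp (k * (r - F))))) := by
    refine Continuous.neg (Continuous.div (by fun_prop) (by fun_prop) ?_)
    intro x
    positivity
  have h := intervalIntegral.intervalIntegral_pos_of_pos_on
    (hcont.intervalIntegrable rt r0) ?_ h1
  · rw [intervalIntegral.integral_neg] at h
    linarith
  · intro x hx
    have hx1 := hx.1
    have hx2 := hx.2
    have e1 : Real.exp (k * (rt - F)) < Real.exp (k * (x - F)) :=
      Real.exp_lt_exp.mpr (mul_lt_mul_of_pos_left (by linarith) hk)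
    have hneg : k * (x - F) < 0 := mul_neg_of_pos_of_neg hk (by linarith)
    have e2 : Real.exp (2 * (k * (x - F))) < 1 := Real.exp_lt_one_iff.mpr (by linarith)
    have e3 : c * Real.exp (k * (rt - F)) < c * Real.exp (k * (x - F)) :=
      mul_lt_mul_of_pos_left e1 hc
    have e4 := neg_abs_le c0
    have e5 : (-c0 - c * Real.exp (k * (x - F))) < 0 := by linarith
    have e6 : 0 < 1 + Real.exp (k * (x - F)) := by positivity
    exact neg_pos.mpr (div_neg_of_neg_of_pos (mul_neg_of_neg_of_pos e5 (by linarith)) e6)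
end
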